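/- Let $a<b$ and $c:=(a+b)/2$. Let $g\in C^1([0,\infty),[0,\infty))$ satisfy $g(0)=0$, $g(s)>0$ and $g'(s)>g(s)/s$ for all $s>0$, and extend $g$ by $g(s)=0$ for $s\le 0$. Let $q\in BV([a,b])$ (that is, $q\in L^1([a,b])$ and its distributional derivative is a finite signed Radon measure) be such that $q\ge 0$ a.e., $q\not\equiv 0$, $q(t)=q(a+b-t)$ for a.e. $t\in[a,b]$, and $q$ is non-decreasing on $[a,c]$ (up to a null set). Solutions are understood in the Carathéodory sense: the derivative of the solution is absolutely continuous on $[a,b]$ and the equation holds a.e. Let $u$ be a solution of $u''+q(t)g(u)=0$, $u(a)=0=u(b)$, with $u>0$ on $(a,b)$, and let $w$ be a solution of $w''+q(t)g'(u(t))w=0$ on $[a,b]$, not identically zero, with $w(a)\ge 0$ and $w'(a)\ge 0$. Then there exists $\xi\in(a,b)$ such that $w(\xi)=0$, $w>0$ on $(a,\xi)$, $\xi$ is the only zero of $w$ in $(a,b]$, and $w(b)<0$. Moreover: (i) unless $q$ is a.e. equal to a constant and $w'(a)=0$, one has $\xi\in(c,b)$ and $w'<0$ on $[\xi,b]$; (ii)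 if $q$ is a.e. equal to a constant and $w'(a)=0$, then $\xi=c$, $w'<0$ on $[\xi,b)$ and $w'(b)=0$. -/

import Mathlib

open Set MeasureTheory
open scoped ContDiff

/-- `q ∈ BV([a,b])`: `q` is integrable on `[a,b]` and its distributional derivative on `(a,b)` is a
finite signed Radon measure `μ` (written through its Jordan decomposition `μ = μ⁺ - μ⁻`). -/
def IsBV (a b : ℝ) (q : ℝ → ℝ) : Prop :=
  IntegrableOn q (Icc a b) ∧
  ∃ μ : SignedMeasure ℝ, ∀ φ : ℝ → ℝ, ContDiff ℝ ∞ φ → HasCompactSupport φ →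
    tsupport φ ⊆ Ioo a b →
    ∫ t in Icc a b, q t * deriv φ t =
      -((∫ t, φ t ∂μ.toJordanDecomposition.posPart) -
        ∫ t, φ t ∂μ.toJordanDecomposition.negPart)

/-- The class of `q` modulo null sets is non-decreasing on `[a,c]`: some representative is. -/
def AEMonotoneOn (q : ℝ → ℝ) (a c : ℝ) : Prop :=
  ∃ p : ℝ → ℝ, MonotoneOn p (Icc a c) ∧ ∀ᵐ t ∂(volume.restrict (Icc a c)), q t = p t

/-- `u`, with derivative `u'` on `[a,b]` (one-sided at the endpoints), is a Carathéodory solution of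
`u'' + F(t, u) = 0` on `[a,b]`: `u'` is absolutely continuous and the equation holds a.e. -/
def IsCaraSol (a b : ℝ) (F : ℝ → ℝ → ℝ) (u u' : ℝ → ℝ) : Prop :=
  (∀ t ∈ Icc a b, HasDerivWithinAt u (u' t) (Icc a b) t) ∧
  AbsolutelyContinuousOnInterval u' a b ∧
  ∀ᵐ t ∂(volume.restrict (Icc a b)), HasDerivWithinAt u' (-F t (u t)) (Icc a b) t

/-- `f` is absolutely continuous on `[a,b]` with almost everywhere derivative `f'`. -/
structure HasACDeriv (f f' : ℝ → ℝ) (a b : ℝ) : Prop where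
  ac : AbsolutelyContinuousOnInterval f a b
  deriv : ∀ᵐ t, t ∈ Icc a b → HasDerivWithinAt f (f' t) (Icc a b) t

namespace HasACDeriv

variable {f f' k k' : ℝ → ℝ} {a b : ℝ}

theorem mono (hf : HasACDeriv f f' a b) {x y : ℝ} (hx : a ≤ x) (hxy : x ≤ y) (hy : y ≤ b) :
    HasACDeriv f f' x y := by
  have hs : Icc x y ⊆ Icc a b := Icc_subset_Icc hx hy
  refine ⟨hf.ac.mono ?_, ?_⟩
  · rwa [uIcc_of_le hxy, uIcc_of_le (hx.trans (hxy.trans hy))]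
  · filter_upwards [hf.deriv] with t ht h
    exact (ht (hs h)).mono hs

theorem congr_deriv (hf : HasACDeriv f f' a b) (h : ∀ᵐ t, t ∈ Icc a b → f' t = k' t) :
    HasACDeriv f k' a b := by
  refine ⟨hf.ac, ?_⟩
  filter_upwards [hf.deriv, h] with t h1 h2 ht
  exact h2 ht ▸ h1 ht

theorem add (hf : HasACDeriv f f' a b) (hk : HasACDeriv k k' a b) :
    HasACDeriv (fun t => f t + k t) (fun t => f' t + k' t) a b := by
  refine ⟨hf.ac.fun_add hk.ac, ?_⟩
  filter_upwards [hf.deriv, hk.deriv] with t h1 h2 ht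
  exact (h1 ht).add (h2 ht)

theorem sub (hf : HasACDeriv f f' a b) (hk : HasACDeriv k k' a b) :
    HasACDeriv (fun t => f t - k t) (fun t => f' t - k' t) a b := by
  refine ⟨hf.ac.fun_sub hk.ac, ?_⟩
  filter_upwards [hf.deriv, hk.deriv] with t h1 h2 ht
  exact (h1 ht).sub (h2 ht)

theorem mul (hf : HasACDeriv f f' a b) (hk : HasACDeriv k k' a b) :
    HasACDeriv (fun t => f t * k t) (fun t => f' t * k t + f t * k' t) a b := by
  refine ⟨hf.ac.fun_mul hk.ac, ?_⟩
  filter_upwards [hf.deriv, hk.deriv] with t h1 h2 ht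
  exact (h1 ht).mul (h2 ht)

theorem const_mul (c : ℝ) (hf : HasACDeriv f f' a b) :
    HasACDeriv (fun t => c * f t) (fun t => c * f' t) a b := by
  refine ⟨hf.ac.const_mul c, ?_⟩
  filter_upwards [hf.deriv] with t h1 ht
  exact (h1 ht).const_mul c

theorem neg (hf : HasACDeriv f f' a b) :
    HasACDeriv (fun t => -f t) (fun t => -f' t) a b := by
  refine ⟨hf.ac.fun_neg, ?_⟩
  filter_upwards [hf.deriv] with t h1 ht
  exact (h1 ht).neg

theorem of_continuousOn (hab : a ≤ b) (hf : ∀ t ∈ Icc a b, HasDerivWithinAt f (f' t) (Icc a b) t)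
    (hc : ContinuousOn f' (Icc a b)) : HasACDeriv f f' a b := by
  refine ⟨?_, Filter.Eventually.of_forall hf⟩
  obtain ⟨C, hC⟩ := isCompact_Icc.exists_bound_of_continuousOn hc
  refine LipschitzOnWith.absolutelyContinuousOnInterval (K := C.toNNReal) ?_
  rw [uIcc_of_le hab]
  refine (convex_Icc a b).lipschitzOnWith_of_nnnorm_hasDerivWithin_le hf fun t ht => ?_
  rw [← NNReal.coe_le_coe, coe_nnnorm]
  exact (hC t ht).trans (Real.le_coe_toNNReal C)

theorem continuousOn (hab : a ≤ b) (hf : HasACDeriv f f' a b) : ContinuousOn f (Icc a b) := by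
  simpa [uIcc_of_le hab] using hf.ac.continuousOn

theorem le_of_nonneg (hab : a ≤ b) (hf : HasACDeriv f f' a b)
    (h : ∀ᵐ t, t ∈ Icc a b → 0 ≤ f' t) : f a ≤ f b := by
  have h1 := hf.ac.integral_deriv_eq_sub
  have h2 : 0 ≤ ∫ t in a..b, _root_.deriv f t := by
    refine intervalIntegral.integral_nonneg_of_ae_restrict hab ?_
    have hne : ∀ᵐ t : ℝ, t ≠ a ∧ t ≠ b := by
      filter_upwards [(countable_singleton a).ae_notMem volume,
        (countable_singleton b).ae_notMem volume] with t h1 h2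
      exact ⟨h1, h2⟩
    refine (ae_restrict_iff' measurableSet_Icc).2 ?_
    filter_upwards [hf.deriv, h, hne] with t h1 h2 h3 ht
    have h4 : Icc a b ∈ nhds t :=
      Icc_mem_nhds (lt_of_le_of_ne ht.1 (Ne.symm h3.1)) (lt_of_le_of_ne ht.2 h3.2)
    rw [((h1 ht).hasDerivAt h4).deriv]
    exact h2 ht
  linarith

theorem monotoneOn (hf : HasACDeriv f f' a b)
    (h : ∀ᵐ t, t ∈ Icc a b → 0 ≤ f' t) : MonotoneOn f (Icc a b) := by
  intro x hx y hy hxy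
  refine (hf.mono hx.1 hxy hy.2).le_of_nonneg hxy ?_
  filter_upwards [h] with t ht hxy
  exact ht ⟨hx.1.trans hxy.1, hxy.2.trans hy.2⟩

theorem antitoneOn (hf : HasACDeriv f f' a b)
    (h : ∀ᵐ t, t ∈ Icc a b → f' t ≤ 0) : AntitoneOn f (Icc a b) := by
  have := hf.neg.monotoneOn (by filter_upwards [h] with t ht h1; linarith [ht h1])
  intro x hx y hy hxy
  linarith [this hx hy hxy]

theorem lt_of_nonneg_of_pos (hf : HasACDeriv f f' a b)
    (h : ∀ᵐ t, t ∈ Icc a b → 0 ≤ f' t) {x y : ℝ} (hx : a ≤ x) (hxy : x < y) (hy : y ≤ b)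
    (hpos : ∀ᵐ t, t ∈ Ioo x y → 0 < f' t) : f a < f b := by
  have hab : a ≤ b := hx.trans (hxy.le.trans hy)
  have hm := hf.monotoneOn h
  by_contra hlt
  have heq : ∀ t ∈ Icc a b, f t = f a := fun t ht =>
    le_antisymm ((hm ht ⟨hab, le_rfl⟩ ht.2).trans (not_lt.1 hlt)) (hm ⟨le_rfl, hab⟩ ht ht.1)
  have hfalse : ∀ᵐ t, t ∉ Ioo x y := by
    filter_upwards [hf.deriv, hpos] with t h1 h2 ht
    have hta : t ∈ Ioo a b := ⟨hx.trans_lt ht.1, ht.2.trans_le hy⟩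
    have h3 := (h1 (Ioo_subset_Icc_self hta)).hasDerivAt (Icc_mem_nhds hta.1 hta.2)
    have h4 : HasDerivAt f 0 t := by
      refine (hasDerivAt_const t (f a)).congr_of_eventuallyEq ?_
      filter_upwards [Icc_mem_nhds hta.1 hta.2] with s hs using heq s hs
    exact absurd (h2 ht) (by rw [h3.unique h4]; exact lt_irrefl 0)
  have := measure_eq_zero_iff_ae_notMem.2 hfalse
  rw [Real.volume_Ioo] at this
  exact absurd (ENNReal.ofReal_eq_zero.1 this) (by linarith)

theorem lipschitzOnWith (hab : a ≤ b) (hf : HasACDeriv f f' a b) {M : ℝ} (hM : 0 ≤ M)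
    (h : ∀ᵐ t, t ∈ Icc a b → |f' t| ≤ M) : LipschitzOnWith M.toNNReal f (Icc a b) := by
  have hid : HasACDeriv (fun t => M * t) (fun _ => M * 1) a b :=
    const_mul M (of_continuousOn hab (fun t _ => hasDerivWithinAt_id t _) continuousOn_const)
  have h1 := (hid.add hf).monotoneOn
    (by filter_upwards [h] with t ht h1; linarith [(abs_le.1 (ht h1)).1])
  have h2 := (hid.sub hf).monotoneOn
    (by filter_upwards [h] with t ht h1; linarith [(abs_le.1 (ht h1)).2])
  refine LipschitzOnWith.of_le_add_mul _ fun x hx y hy => ?_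
  rw [Real.coe_toNNReal _ hM, Real.dist_eq]
  rcases le_total x y with hxy | hxy
  · have := h1 hx hy hxy
    rw [abs_of_nonpos (by linarith)]
    simp only at this
    linarith
  · have := h2 hy hx hxy
    rw [abs_of_nonneg (by linarith)]
    simp only at this
    linarith

/-- Reflection of the interval about its midpoint. -/
theorem comp_reflect (hab : a ≤ b) (hf : HasACDeriv f f' a b) {M : ℝ} (hM : 0 ≤ M)
    (h : ∀ᵐ t, t ∈ Icc a b → |f' t| ≤ M) :
    HasACDeriv (fun t => f (a + b - t)) (fun t => -f' (a + b - t)) a b := by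
  have hmaps : MapsTo (fun t => a + b - t) (Icc a b) (Icc a b) := fun t ht =>
    ⟨by linarith [ht.2], by linarith [ht.1]⟩
  constructor
  · refine LipschitzOnWith.absolutelyContinuousOnInterval (K := M.toNNReal) ?_
    rw [uIcc_of_le hab]
    intro x hx y hy
    have := hf.lipschitzOnWith hab hM h (hmaps hx) (hmaps hy)
    simpa only [edist_dist, Real.dist_eq, sub_sub_sub_cancel_left, abs_sub_comm] using this
  · have := (Measure.measurePreserving_sub_left volume (a + b)).quasiMeasurePreserving.ae hf.deriv
    filter_upwards [this] with t ht h1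
    have h2 := (ht (hmaps h1)).comp t ((hasDerivWithinAt_id t (Icc a b)).const_sub (a + b)) hmaps
    simpa [Function.comp_def] using h2

/-- The quantity `Φ + P h`, where `Φ' = -P h'`, is non-decreasing when `P` is monotone and
`h` is a nonnegative function of class `C¹`. -/
theorem add_mul_le_of_monotoneOn {Φ P h h' : ℝ → ℝ} {a b : ℝ} (hab : a ≤ b)
    (hP : MonotoneOn P (Icc a b))
    (hΦ : HasACDeriv Φ (fun t => -(P t * h' t)) a b)
    (hh : ∀ t ∈ Icc a b, HasDerivWithinAt h (h' t) (Icc a b) t)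
    (hc : ContinuousOn h' (Icc a b)) (hpos : ∀ t ∈ Icc a b, 0 ≤ h t) :
    Φ a + P a * h a ≤ Φ b + P b * h b := by
  obtain ⟨C, hC⟩ := isCompact_Icc.exists_bound_of_continuousOn hc
  have hhac : HasACDeriv h h' a b := of_continuousOn hab hh hc
  have hid : HasACDeriv (fun t => t) (fun _ => 1) a b :=
    of_continuousOn hab (fun t _ => hasDerivWithinAt_id t _) continuousOn_const
  have key : ∀ n : ℕ, ∀ x ∈ Icc a b, ∀ y ∈ Icc a b, x ≤ y →
      Φ x + P x * h x ≤ Φ y + P y * h y + C * ((y - x) / 2 ^ n) * (P y - P x) := by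
    intro n
    induction n with
    | zero =>
      intro x hx y hy hxy
      have h1 := ((hΦ.add (hhac.const_mul (P y))).add
        (hid.const_mul (C * (P y - P x)))).mono hx.1 hxy hy.2
      have h2 := h1.le_of_nonneg hxy (Filter.Eventually.of_forall fun t ht => by
        have htab : t ∈ Icc a b := ⟨hx.1.trans ht.1, ht.2.trans hy.2⟩
        have h3 := hP htab hy ht.2
        have h4 := hP hx htab ht.1
        have h5 := abs_le.1 (hC t htab)
        nlinarith [h5.1, h5.2])
      have h3 := mul_le_mul_of_nonneg_right (hP hx hy hxy) (hpos x hx)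
      simp only [pow_zero, div_one] at h2 ⊢
      nlinarith
    | succ n ih =>
      intro x hx y hy hxy
      have hm : (x + y) / 2 ∈ Icc a b := ⟨by linarith [hx.1, hy.1], by linarith [hx.2, hy.2]⟩
      have h1 := ih x hx _ hm (by linarith)
      have h2 := ih _ hm y hy (by linarith)
      have e1 : ((x + y) / 2 - x) / 2 ^ n = (y - x) / 2 ^ (n + 1) := by
        rw [pow_succ]; field_simp; ring
      have e2 : (y - (x + y) / 2) / 2 ^ n = (y - x) / 2 ^ (n + 1) := by
        rw [pow_succ]; field_simp; ring
      rw [e1] at h1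
      rw [e2] at h2
      linarith
  have hlim : Filter.Tendsto
      (fun n : ℕ => Φ b + P b * h b + C * ((b - a) / 2 ^ n) * (P b - P a)) Filter.atTop
      (nhds (Φ b + P b * h b + C * 0 * (P b - P a))) := by
    refine tendsto_const_nhds.add (Filter.Tendsto.mul_const _ (Filter.Tendsto.const_mul _ ?_))
    have := (tendsto_pow_atTop_nhds_zero_of_lt_one (r := (1 / 2 : ℝ)) (by norm_num)
      (by norm_num)).const_mul (b - a)
    simpa [div_eq_mul_inv] using this
  have := ge_of_tendsto' hlim fun n => key n a ⟨le_rfl, hab⟩ b ⟨hab, le_rfl⟩ hab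
  linarith

end HasACDeriv

/-- Uniqueness for the Cauchy problem of a second order differential inequality `|z''| ≤ K |z|`. -/
theorem eq_zero_of_abs_deriv2_le {z z' z'' : ℝ → ℝ} {a b K τ : ℝ} (hab : a ≤ b)
    (hz : ∀ t ∈ Icc a b, HasDerivWithinAt z (z' t) (Icc a b) t)
    (hz' : HasACDeriv z' z'' a b) (hK : ∀ᵐ t, t ∈ Icc a b → |z'' t| ≤ K * |z t|)
    (hτ : τ ∈ Icc a b) (h0 : z τ = 0) (h1 : z' τ = 0) :
    ∀ t ∈ Icc a b, z t = 0 ∧ z' t = 0 := by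
  have hzac : HasACDeriv z z' a b := HasACDeriv.of_continuousOn hab hz (hz'.continuousOn hab)
  have hN := (hzac.mul hzac).add (hz'.mul hz')
  have hexp : ∀ c : ℝ, HasACDeriv (fun t => Real.exp (c * t)) (fun t => Real.exp (c * t) * c) a b :=
    fun c => HasACDeriv.of_continuousOn hab
      (fun t _ => by simpa using ((hasDerivAt_id t).const_mul c).exp.hasDerivWithinAt)
      (by fun_prop)
  set L := 1 + |K| with hL
  have hbound : ∀ᵐ t, t ∈ Icc a b →
      |z' t * z t + z t * z' t + (z'' t * z' t + z' t * z'' t)| ≤ L * (z t * z t + z' t * z' t) := by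
    filter_upwards [hK] with t ht h2
    have h3 : |z'' t| ≤ |K| * |z t| :=
      (ht h2).trans (mul_le_mul_of_nonneg_right (le_abs_self K) (abs_nonneg _))
    have h4 : |z' t * z t + z t * z' t + (z'' t * z' t + z' t * z'' t)|
        = 2 * (|z' t| * |z t + z'' t|) := by
      rw [show z' t * z t + z t * z' t + (z'' t * z' t + z' t * z'' t)
        = 2 * (z' t * (z t + z'' t)) by ring, abs_mul, abs_mul, abs_two]
    have h5 : |z t + z'' t| ≤ L * |z t| := by
      refine (abs_add_le _ _).trans ?_
      rw [hL]; linarith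
    have h6 : 0 ≤ L := by positivity
    rw [h4, ← abs_mul_abs_self (z t), ← abs_mul_abs_self (z' t)]
    have h7 := mul_le_mul_of_nonneg_left h5 (abs_nonneg (z' t))
    nlinarith [mul_nonneg h6 (sq_nonneg (|z t| - |z' t|))]
  have hanti := (hN.mul (hexp (-L))).antitoneOn (by
    filter_upwards [hbound] with t ht h2
    have := (abs_le.1 (ht h2)).2
    have e := Real.exp_pos (-L * t)
    nlinarith)
  have hmono := (hN.mul (hexp L)).monotoneOn (by
    filter_upwards [hbound] with t ht h2
    have := (abs_le.1 (ht h2)).1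
    have e := Real.exp_pos (L * t)
    nlinarith)
  intro t ht
  have hle : z t * z t + z' t * z' t ≤ 0 := by
    rcases le_total τ t with hle | hle
    · have := hanti hτ ht hle
      simp only [h0, h1, mul_zero, add_zero, zero_mul] at this
      exact nonpos_of_mul_nonpos_left this (Real.exp_pos _)
    · have := hmono ht hτ hle
      simp only [h0, h1, mul_zero, add_zero, zero_mul] at this
      exact nonpos_of_mul_nonpos_left this (Real.exp_pos _)
  constructor <;> nlinarith [mul_self_nonneg (z t), mul_self_nonneg (z' t)]

theorem exists_forall_Ioo_lt_of_deriv_pos {f : ℝ → ℝ} {d a b x : ℝ}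
    (hf : HasDerivWithinAt f d (Icc a b) x) (hx : a ≤ x) (hxb : x < b) (hd : 0 < d) :
    ∃ y, x < y ∧ y ≤ b ∧ ∀ t ∈ Ioo x y, f x < f t := by
  have h1 := (hasDerivWithinAt_iff_tendsto_slope' self_notMem_Ioi).1
    (hf.mono_of_mem_nhdsWithin (Icc_mem_nhdsGT_of_mem ⟨hx, hxb⟩))
  obtain ⟨y, hy, hsub⟩ := mem_nhdsGT_iff_exists_Ioo_subset.1 (h1.eventually (lt_mem_nhds hd))
  refine ⟨min y b, lt_min hy hxb, min_le_right _ _, fun t ht => ?_⟩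
  have h2 : 0 < slope f x t := hsub ⟨ht.1, ht.2.trans_le (min_le_left _ _)⟩
  rw [slope_def_field, div_pos_iff_of_pos_right (sub_pos.2 ht.1)] at h2
  linarith

theorem exists_forall_Ioo_lt_of_deriv_neg {f : ℝ → ℝ} {d a b x : ℝ}
    (hf : HasDerivWithinAt f d (Icc a b) x) (hx : a < x) (hxb : x ≤ b) (hd : d < 0) :
    ∃ y, y < x ∧ a ≤ y ∧ ∀ t ∈ Ioo y x, f x < f t := by
  have h1 := (hasDerivWithinAt_iff_tendsto_slope' self_notMem_Iio).1
    (hf.mono_of_mem_nhdsWithin (Icc_mem_nhdsLT_of_mem ⟨hx, hxb⟩))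
  obtain ⟨y, hy, hsub⟩ := mem_nhdsLT_iff_exists_Ioo_subset.1 (h1.eventually (gt_mem_nhds hd))
  refine ⟨max y a, max_lt hy hx, le_max_right _ _, fun t ht => ?_⟩
  have h2 : slope f x t < 0 := hsub ⟨(le_max_left _ _).trans_lt ht.1, ht.2⟩
  rw [slope_def_field, div_neg_iff] at h2
  rcases h2 with h2 | h2 <;> linarith [ht.2]

/-- A nonnegative function vanishing at `x` has a nonnegative right derivative there. -/
theorem deriv_nonneg_of_nonneg_right {f : ℝ → ℝ} {d a b x y : ℝ}
    (hf : HasDerivWithinAt f d (Icc a b) x) (hx : a ≤ x) (hxy : x < y) (hyb : y ≤ b)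
    (h0 : f x = 0) (h : ∀ t ∈ Ioo x y, 0 ≤ f t) : 0 ≤ d := by
  by_contra hd
  obtain ⟨z, hxz, -, hz⟩ := exists_forall_Ioo_lt_of_deriv_pos hf.fun_neg hx (hxy.trans_le hyb)
    (by linarith)
  obtain ⟨t, ht1, ht2⟩ := exists_between (lt_min hxz hxy)
  have h1 := hz t ⟨ht1, ht2.trans_le (min_le_left _ _)⟩
  have h2 := h t ⟨ht1, ht2.trans_le (min_le_right _ _)⟩
  linarith

/-- A nonnegative function vanishing at `x` has a nonpositive left derivative there. -/
theorem deriv_nonpos_of_nonneg_left {f : ℝ → ℝ} {d a b x y : ℝ}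
    (hf : HasDerivWithinAt f d (Icc a b) x) (hy : a ≤ y) (hyx : y < x) (hxb : x ≤ b)
    (h0 : f x = 0) (h : ∀ t ∈ Ioo y x, 0 ≤ f t) : d ≤ 0 := by
  by_contra hd
  obtain ⟨z, hxz, -, hz⟩ := exists_forall_Ioo_lt_of_deriv_neg hf.fun_neg (hy.trans_lt hyx) hxb
    (by linarith)
  obtain ⟨t, ht1, ht2⟩ := exists_between (max_lt hxz hyx)
  have h1 := hz t ⟨(le_max_left _ _).trans_lt ht1, ht2⟩
  have h2 := h t ⟨(le_max_right _ _).trans_lt ht1, ht2⟩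
  linarith

theorem nonneg_on_Icc_of_nonneg_on_Ioo {f : ℝ → ℝ} {x y : ℝ} (hxy : x < y)
    (hf : ContinuousOn f (Icc x y)) (h : ∀ t ∈ Ioo x y, 0 ≤ f t) : ∀ t ∈ Icc x y, 0 ≤ f t := by
  intro t ht
  rw [← closure_Ioo hxy.ne] at hf ht
  exact le_on_closure h continuousOn_const hf ht

/-- A function negative at `x` that does not stay negative on `[x,b]` has a first zero. -/
theorem exists_first_zero {f : ℝ → ℝ} {x b : ℝ} (hf : ContinuousOn f (Icc x b)) (hx : f x < 0)
    (h : ∃ t ∈ Icc x b, 0 ≤ f t) : ∃ η ∈ Ioc x b, f η = 0 ∧ ∀ t ∈ Ico x η, f t < 0 := by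
  obtain ⟨s, hs, hs0⟩ := h
  have hcl : IsClosed (Icc x b ∩ f ⁻¹' Ici 0) := hf.preimage_isClosed_of_isClosed isClosed_Icc isClosed_Ici
  have hco : IsCompact (Icc x b ∩ f ⁻¹' Ici 0) := isCompact_Icc.of_isClosed_subset hcl inter_subset_left
  obtain ⟨η, ⟨hη, hη0⟩, hleast⟩ := hco.exists_isLeast ⟨s, hs, hs0⟩
  have hlt : ∀ t ∈ Ico x η, f t < 0 := fun t ht => by
    by_contra h0
    exact absurd (hleast ⟨⟨ht.1, ht.2.le.trans hη.2⟩, not_lt.1 h0⟩) (not_le.2 ht.2)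
  have hxη : x < η := lt_of_le_of_ne hη.1 fun h => by
    rw [← h] at hη0; exact absurd hη0 (not_le.2 hx)
  refine ⟨η, ⟨hxη, hη.2⟩, le_antisymm ?_ hη0, hlt⟩
  have := nonneg_on_Icc_of_nonneg_on_Ioo (f := fun t => -f t) hxη
    (hf.mono (Icc_subset_Icc_right hη.2)).fun_neg
    (fun t ht => by linarith [hlt t ⟨ht.1.le, ht.2⟩]) η ⟨hxη.le, le_rfl⟩
  linarith

/-- A nonnegative weight on `[a,b]`, symmetric about the midpoint, non-decreasing up to it and
positive around it. -/
structure IsSymmUnimodal (P : ℝ → ℝ) (a b : ℝ) : Prop where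
  nonneg : ∀ t, 0 ≤ P t
  mono : MonotoneOn P (Icc a ((a + b) / 2))
  symm : ∀ t, P (a + b - t) = P t
  pos : ∃ x, a ≤ x ∧ x < (a + b) / 2 ∧ ∀ t ∈ Ioc x ((a + b) / 2), 0 < P t

namespace IsSymmUnimodal

variable {P : ℝ → ℝ} {a b : ℝ}

theorem anti (hP : IsSymmUnimodal P a b) : AntitoneOn P (Icc ((a + b) / 2) b) := by
  intro x hx y hy hxy
  rw [← hP.symm x, ← hP.symm y]
  exact hP.mono ⟨by linarith [hy.2], by linarith [hy.1]⟩ ⟨by linarith [hx.2], by linarith [hx.1]⟩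
    (by linarith)

theorem le_mid (hP : IsSymmUnimodal P a b) (hab : a < b) {t : ℝ} (ht : t ∈ Icc a b) :
    P t ≤ P ((a + b) / 2) := by
  rcases le_total t ((a + b) / 2) with h | h
  · exact hP.mono ⟨ht.1, h⟩ ⟨by linarith, le_rfl⟩ h
  · exact hP.anti ⟨le_rfl, by linarith⟩ ⟨h, ht.2⟩ h

end IsSymmUnimodal

theorem exists_isSymmUnimodal {q : ℝ → ℝ} {a b : ℝ}
    (hq_nonneg : ∀ᵐ t ∂(volume.restrict (Icc a b)), 0 ≤ q t)
    (hq_ne : ¬ ∀ᵐ t ∂(volume.restrict (Icc a b)), q t = 0)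
    (hq_symm : ∀ᵐ t ∂(volume.restrict (Icc a b)), q t = q (a + b - t))
    (hq_mono : AEMonotoneOn q a ((a + b) / 2)) :
    ∃ P, IsSymmUnimodal P a b ∧ ∀ᵐ t, t ∈ Icc a b → q t = P t := by
  obtain ⟨p, hp, hqp⟩ := hq_mono
  rw [ae_restrict_iff' measurableSet_Icc] at *
  set c := (a + b) / 2 with hc
  let m : ℝ → ℝ := fun t => min t (a + b - t)
  have hmem : ∀ t ∈ Icc a b, m t ∈ Icc a c := fun t ht =>
    ⟨le_min ht.1 (by linarith [ht.2]), by
      rcases le_total t c with h | h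
      · exact (min_le_left _ _).trans h
      · exact (min_le_right _ _).trans (by linarith)⟩
  have hsymm : ∀ t, m (a + b - t) = m t := fun t => by simp [m, min_comm]
  have hm : ∀ t ≤ c, m t = t := fun t ht => min_eq_left (by linarith)
  have hrefl := (Measure.measurePreserving_sub_left volume (a + b)).quasiMeasurePreserving.ae hqp
  have heq : ∀ᵐ t, t ∈ Icc a b → q t = max (p (m t)) 0 := by
    filter_upwards [hq_nonneg, hq_symm, hqp, hrefl] with t h1 h2 h3 h4 ht
    have : q t = p (m t) := by
      rcases le_total t c with h | h
      · rw [hm t h]; exact h3 ⟨ht.1, h⟩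
      · rw [← hsymm, hm _ (by linarith), h2 ht]
        exact h4 ⟨by linarith [ht.2], by linarith⟩
    rw [← this, max_eq_left (h1 ht)]
  refine ⟨fun t => max (p (m t)) 0, ⟨fun t => le_max_right _ _, ?_, fun t => by simp only [hsymm],
    ?_⟩, heq⟩
  · intro x hx y hy hxy
    simp only [hm x hx.2, hm y hy.2]
    exact max_le_max_right 0 (hp hx hy hxy)
  · by_contra hno
    push Not at hno
    refine hq_ne ?_
    have hzero : ∀ t ∈ Ico a c, p t ≤ 0 := by
      intro t ht
      obtain ⟨s, hs, hs0⟩ := hno t ht.1 ht.2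
      have h1 : p s ≤ 0 := by
        rw [← hm s hs.2]; exact (le_max_left _ _).trans hs0
      exact (hp ⟨ht.1, ht.2.le⟩ ⟨ht.1.trans hs.1.le, hs.2⟩ hs.1.le).trans h1
    filter_upwards [heq, (countable_singleton c).ae_notMem volume] with t h1 h2 ht
    rw [h1 ht]
    refine max_eq_right (hzero _ ⟨(hmem t ht).1, lt_of_le_of_ne (hmem t ht).2 fun h => h2 ?_⟩)
    rcases min_choice t (a + b - t) with h3 | h3
    · exact (h3.symm.trans h : t = c)
    · have : a + b - t = c := h3.symm.trans h
      show t = c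
      linarith

/-- `u` is a nonnegative solution of `u'' + P g(u) = 0` on `[a,b]` vanishing at the endpoints and
positive in between. -/
structure IsPosDirichletSol (P g u u' : ℝ → ℝ) (a b : ℝ) : Prop where
  deriv : ∀ t ∈ Icc a b, HasDerivWithinAt u (u' t) (Icc a b) t
  deriv2 : HasACDeriv u' (fun t => -(P t * g (u t))) a b
  left : u a = 0
  right : u b = 0
  pos : ∀ t ∈ Ioo a b, 0 < u t

namespace IsPosDirichletSol

variable {P g u u' : ℝ → ℝ} {a b : ℝ}

theorem nonneg (hu : IsPosDirichletSol P g u u' a b) : ∀ t ∈ Icc a b, 0 ≤ u t := by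
  intro t ht
  rcases eq_or_lt_of_le ht.1 with rfl | h1
  · exact hu.left.ge
  rcases eq_or_lt_of_le ht.2 with rfl | h2
  · exact hu.right.ge
  · exact (hu.pos t ⟨h1, h2⟩).le

theorem continuousOn (hu : IsPosDirichletSol P g u u' a b) : ContinuousOn u (Icc a b) :=
  fun t ht => (hu.deriv t ht).continuousWithinAt

theorem continuousOn_deriv (hab : a < b) (hu : IsPosDirichletSol P g u u' a b) :
    ContinuousOn u' (Icc a b) := hu.deriv2.continuousOn hab.le

theorem exists_bound (hab : a < b) (hP : IsSymmUnimodal P a b)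
    (hu : IsPosDirichletSol P g u u' a b) (hg : Continuous g) :
    ∃ M, 0 ≤ M ∧ ∀ t ∈ Icc a b, |-(P t * g (u t))| ≤ M := by
  obtain ⟨C, hC⟩ := isCompact_Icc.exists_bound_of_continuousOn (hg.comp_continuousOn hu.continuousOn)
  have hC0 : 0 ≤ C := (norm_nonneg _).trans (hC a ⟨le_rfl, hab.le⟩)
  refine ⟨P ((a + b) / 2) * C, mul_nonneg (hP.nonneg _) hC0, fun t ht => ?_⟩
  rw [abs_neg, abs_mul, abs_of_nonneg (hP.nonneg t)]
  exact mul_le_mul (hP.le_mid hab ht) (hC t ht) (abs_nonneg _) (hP.nonneg _)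

theorem reflect (hab : a < b) (hP : IsSymmUnimodal P a b)
    (hu : IsPosDirichletSol P g u u' a b) (hg : Continuous g) :
    IsPosDirichletSol P g (fun t => u (a + b - t)) (fun t => -u' (a + b - t)) a b := by
  obtain ⟨M, hM, hb⟩ := hu.exists_bound hab hP hg
  have hmaps : MapsTo (fun t => a + b - t) (Icc a b) (Icc a b) := fun t ht =>
    ⟨by linarith [ht.2], by linarith [ht.1]⟩
  refine ⟨fun t ht => ?_, ?_, by simp [hu.right], by simp [hu.left],
    fun t ht => hu.pos _ ⟨by linarith [ht.2], by linarith [ht.1]⟩⟩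
  · have h2 := (hu.deriv _ (hmaps ht)).comp t
      ((hasDerivWithinAt_id t (Icc a b)).const_sub (a + b)) hmaps
    simpa [Function.comp_def] using h2
  · refine (hu.deriv2.comp_reflect hab.le hM (Filter.Eventually.of_forall hb)).neg.congr_deriv
      (Filter.Eventually.of_forall fun t _ => ?_)
    simp only [hP.symm t, neg_neg]

theorem antitoneOn_deriv (hP : IsSymmUnimodal P a b)
    (hu : IsPosDirichletSol P g u u' a b) (hg0 : ∀ s, 0 ≤ g s) : AntitoneOn u' (Icc a b) :=
  hu.deriv2.antitoneOn (Filter.Eventually.of_forall fun t _ =>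
    neg_nonpos.2 (mul_nonneg (hP.nonneg t) (hg0 _)))

theorem deriv_mid_nonneg (hab : a < b) (hP : IsSymmUnimodal P a b)
    (hu : IsPosDirichletSol P g u u' a b) (hg : Continuous g) (hg0 : ∀ s, 0 ≤ g s)
    (hg_C1 : ContDiffOn ℝ 1 g (Ici 0)) : 0 ≤ u' ((a + b) / 2) := by
  set c := (a + b) / 2 with hc
  by_contra hneg
  rw [not_le] at hneg
  have hac : a < c := by linarith
  have hcb : c < b := by linarith
  have hcc : a + b - c = c := by linarith
  have hcI : c ∈ Icc a b := ⟨hac.le, hcb.le⟩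
  have hv := hu.reflect hab hP hg
  set v : ℝ → ℝ := fun t => u (a + b - t) with hvdef
  set v' : ℝ → ℝ := fun t => -u' (a + b - t) with hvdef'
  have hvc : v c = u c := by simp only [hvdef, hcc]
  have hvc' : v' c = -u' c := by simp only [hvdef', hcc]
  have hz : ∀ t ∈ Icc a b, HasDerivWithinAt (fun t => u t - v t) (u' t - v' t) (Icc a b) t :=
    fun t ht => (hu.deriv t ht).sub (hv.deriv t ht)
  have hzc : ContinuousOn (fun t => u t - v t) (Icc a b) := hu.continuousOn.sub hv.continuousOn
  -- `τ` is the last point before `c` where `u ≤ v`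
  obtain ⟨y, hyc, hay, hy⟩ := exists_forall_Ioo_lt_of_deriv_neg (hz c hcI) hac hcb.le
    (by rw [hvc']; linarith)
  obtain ⟨y₁, hyy₁, hy₁c⟩ := exists_between hyc
  have hsub : Icc a y₁ ⊆ Icc a b := Icc_subset_Icc_right (hy₁c.le.trans hcb.le)
  have hcl : IsClosed (Icc a y₁ ∩ (fun t => u t - v t) ⁻¹' Iic 0) :=
    (hzc.mono hsub).preimage_isClosed_of_isClosed isClosed_Icc isClosed_Iic
  obtain ⟨τ, ⟨hτ, hτ0⟩, hgr⟩ := (isCompact_Icc.of_isClosed_subset hcl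
    inter_subset_left).exists_isGreatest ⟨a, ⟨le_rfl, hay.trans hyy₁.le⟩, by
      simp [hu.left, hv.left]⟩
  have hτc : τ < c := hτ.2.trans_lt hy₁c
  have hpos : ∀ t ∈ Ioo τ c, 0 ≤ u t - v t := by
    intro t ht
    rcases le_or_gt t y₁ with h | h
    · by_contra h0
      exact absurd (hgr ⟨⟨hτ.1.trans ht.1.le, h⟩, (not_le.1 h0).le⟩) (not_le.2 ht.1)
    · have := hy t ⟨hyy₁.trans h, ht.2⟩
      rw [hvc] at this
      linarith
  have hpos' := nonneg_on_Icc_of_nonneg_on_Ioo hτc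
    (hzc.mono (Icc_subset_Icc hτ.1 hcb.le)) hpos
  have hτz : u τ - v τ = 0 := le_antisymm hτ0 (hpos' τ ⟨le_rfl, hτc.le⟩)
  have hτI : τ ∈ Icc a b := hsub hτ
  have hder : 0 ≤ u' τ - v' τ :=
    deriv_nonneg_of_nonneg_right (hz τ hτI) hτ.1 hτc hcb.le hτz hpos
  have hvτ : 0 < v' τ := by
    have := hv.antitoneOn_deriv hP hg0 hτI hcI hτc.le
    rw [hvc'] at this
    linarith
  -- comparison of the energies of `u` and `v` on `[τ,c]`
  set G : ℝ → ℝ := fun s => ∫ x in (0 : ℝ)..s, g x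
  have hG : ∀ s, HasDerivAt G (g s) s := fun s => (hg.integral_hasStrictDerivAt 0 s).hasDerivAt
  have hGm : Monotone G := monotone_of_hasDerivAt_nonneg hG hg0
  have hsub' : Icc τ c ⊆ Icc a b := Icc_subset_Icc hτ.1 hcb.le
  have henergy := HasACDeriv.add_mul_le_of_monotoneOn hτc.le
    (Φ := fun t => u' t * u' t - v' t * v' t) (h := fun t => 2 * (G (u t) - G (v t)))
    (h' := fun t => 2 * (g (u t) * u' t - g (v t) * v' t))
    (hP.mono.mono (Icc_subset_Icc_left hτ.1))
    ((((hu.deriv2.mul hu.deriv2).sub (hv.deriv2.mul hv.deriv2)).congr_deriv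
      (Filter.Eventually.of_forall fun t _ => by ring)).mono hτ.1 hτc.le hcb.le)
    (fun t ht => ((((hG _).comp_hasDerivWithinAt t (hu.deriv t (hsub' ht))).sub
      ((hG _).comp_hasDerivWithinAt t (hv.deriv t (hsub' ht)))).const_mul 2).mono hsub')
    (((((hg.comp_continuousOn hu.continuousOn).mul (hu.continuousOn_deriv hab)).sub
      ((hg.comp_continuousOn hv.continuousOn).mul (hv.continuousOn_deriv hab))).const_mul 2).mono
        hsub')
    (fun t ht => by
      have := hGm (sub_nonneg.1 (hpos' t ht))
      linarith)
  simp only [hvc, hvc', sub_eq_zero.1 hτz, sub_self, mul_zero, add_zero] at henergy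
  have hτeq : u' τ - v' τ = 0 := by nlinarith
  -- uniqueness for the Cauchy problem at `τ`
  obtain ⟨C, hC⟩ := isCompact_Icc.exists_bound_of_continuousOn hu.continuousOn
  have hlip : ∃ K, LipschitzOnWith K g (Icc 0 C) :=
    (hg_C1.mono Icc_subset_Ici_self).exists_lipschitzOnWith one_ne_zero (convex_Icc 0 C)
      isCompact_Icc
  obtain ⟨K, hK⟩ := hlip
  have huC : ∀ t ∈ Icc a b, u t ∈ Icc 0 C := fun t ht =>
    ⟨hu.nonneg t ht, (le_abs_self _).trans (hC t ht)⟩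
  have huniq := eq_zero_of_abs_deriv2_le (K := P c * K) hab.le hz (hu.deriv2.sub hv.deriv2)
    (Filter.Eventually.of_forall fun t ht => by
      have h1 := hK.dist_le_mul _ (huC t ht) _
        (huC (a + b - t) ⟨by linarith [ht.2], by linarith [ht.1]⟩)
      rw [Real.dist_eq, Real.dist_eq] at h1
      rw [show -(P t * g (u t)) - -(P t * g (v t)) = -(P t * (g (u t) - g (v t))) by ring, abs_neg,
        abs_mul, abs_of_nonneg (hP.nonneg t), mul_assoc]
      exact mul_le_mul (hP.le_mid hab ht) h1 (abs_nonneg _) (hP.nonneg _)) hτI hτz hτeq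
  have := (huniq c hcI).2
  rw [hvc'] at this
  linarith

theorem deriv_mid (hab : a < b) (hP : IsSymmUnimodal P a b)
    (hu : IsPosDirichletSol P g u u' a b) (hg : Continuous g) (hg0 : ∀ s, 0 ≤ g s)
    (hg_C1 : ContDiffOn ℝ 1 g (Ici 0)) : u' ((a + b) / 2) = 0 := by
  have h1 := hu.deriv_mid_nonneg hab hP hg hg0 hg_C1
  have h2 := (hu.reflect hab hP hg).deriv_mid_nonneg hab hP hg hg0 hg_C1
  rw [show a + b - (a + b) / 2 = (a + b) / 2 by ring] at h2
  linarith

theorem deriv_pos_of_lt_mid (hab : a < b) (hP : IsSymmUnimodal P a b)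
    (hu : IsPosDirichletSol P g u u' a b) (hg : Continuous g) (hg0 : ∀ s, 0 ≤ g s)
    (hg_C1 : ContDiffOn ℝ 1 g (Ici 0)) (hg_pos : ∀ s > 0, 0 < g s) :
    ∀ t ∈ Ico a ((a + b) / 2), 0 < u' t := by
  intro t ht
  obtain ⟨x, hax, hxc, hx⟩ := hP.pos
  have h1 := (hu.deriv2.neg.mono ht.1 ht.2.le (by linarith)).lt_of_nonneg_of_pos
    (Filter.Eventually.of_forall fun s _ => by
      rw [neg_neg]; exact mul_nonneg (hP.nonneg s) (hg0 _)) (le_max_left t x)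
    (max_lt ht.2 hxc) le_rfl
    (Filter.Eventually.of_forall fun s hs => by
      rw [neg_neg]
      exact mul_pos (hx s ⟨(le_max_right _ _).trans_lt hs.1, hs.2.le⟩)
        (hg_pos _ (hu.pos s ⟨hax.trans_lt ((le_max_right _ _).trans_lt hs.1),
          by linarith [hs.2]⟩)))
  rw [hu.deriv_mid hab hP hg hg0 hg_C1] at h1
  linarith

theorem deriv_neg_of_mid_lt (hab : a < b) (hP : IsSymmUnimodal P a b)
    (hu : IsPosDirichletSol P g u u' a b) (hg : Continuous g) (hg0 : ∀ s, 0 ≤ g s)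
    (hg_C1 : ContDiffOn ℝ 1 g (Ici 0)) (hg_pos : ∀ s > 0, 0 < g s) :
    ∀ t ∈ Ioc ((a + b) / 2) b, u' t < 0 := by
  intro t ht
  have h := (hu.reflect hab hP hg).deriv_pos_of_lt_mid hab hP hg hg0 hg_C1 hg_pos (a + b - t)
    ⟨by linarith [ht.2], by linarith [ht.1]⟩
  rw [sub_sub_cancel] at h
  linarith

end IsPosDirichletSol

theorem lt_of_hasDerivWithinAt_neg {f f' : ℝ → ℝ} {a b x y : ℝ}
    (hf : ∀ t ∈ Icc a b, HasDerivWithinAt f (f' t) (Icc a b) t) (hx : a ≤ x) (hxy : x < y)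
    (hy : y ≤ b) (hneg : ∀ t ∈ Ico x y, f' t < 0) : f y < f x := by
  refine strictAntiOn_of_deriv_neg (convex_Icc x y)
    (fun t ht => ((hf t ⟨hx.trans ht.1, ht.2.trans hy⟩).continuousWithinAt).mono
      (Icc_subset_Icc hx hy)) (fun t ht => ?_) ⟨le_rfl, hxy.le⟩ ⟨hxy.le, le_rfl⟩ hxy
  rw [interior_Icc] at ht
  have ht' : t ∈ Ioo a b := ⟨hx.trans_lt ht.1, ht.2.trans_le hy⟩
  rw [((hf t (Ioo_subset_Icc_self ht')).hasDerivAt (Icc_mem_nhds ht'.1 ht'.2)).deriv]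
  exact hneg t ⟨ht.1.le, ht.2⟩

/-- The extension by zero of a function on `[0,∞)` vanishing at `0` is continuous. -/
theorem continuous_of_continuousOn_Ici {g : ℝ → ℝ} (hg : ContinuousOn g (Ici 0))
    (hg_ext : ∀ s ≤ (0 : ℝ), g s = 0) : Continuous g := by
  have h : g = fun s => g (max s 0) := by
    funext s
    rcases le_total s 0 with hs | hs
    · rw [max_eq_right hs, hg_ext s hs, hg_ext 0 le_rfl]
    · rw [max_eq_left hs]
  rw [h]
  exact hg.comp_continuous (continuous_id.max continuous_const) fun s => le_max_right s 0

/-- `w` solves the linear equation `w'' + P γ w = 0` on `[a,b]` and is not identically zero. -/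
structure IsNontrivialLinearSol (P γ w w' : ℝ → ℝ) (a b : ℝ) : Prop where
  deriv : ∀ t ∈ Icc a b, HasDerivWithinAt w (w' t) (Icc a b) t
  deriv2 : HasACDeriv w' (fun t => -(P t * γ t * w t)) a b
  ne_zero : ∃ t ∈ Icc a b, w t ≠ 0

namespace IsNontrivialLinearSol

variable {P γ w w' : ℝ → ℝ} {a b : ℝ}

theorem continuousOn (hw : IsNontrivialLinearSol P γ w w' a b) : ContinuousOn w (Icc a b) :=
  fun t ht => (hw.deriv t ht).continuousWithinAt

theorem deriv_ne_zero (hab : a < b) (hP : IsSymmUnimodal P a b)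
    (hw : IsNontrivialLinearSol P γ w w' a b) (hγ : ContinuousOn γ (Icc a b)) {t : ℝ}
    (ht : t ∈ Icc a b) (h0 : w t = 0) : w' t ≠ 0 := by
  intro h1
  obtain ⟨C, hC⟩ := isCompact_Icc.exists_bound_of_continuousOn hγ
  obtain ⟨s, hs, hs0⟩ := hw.ne_zero
  refine hs0 (eq_zero_of_abs_deriv2_le (K := P ((a + b) / 2) * C) hab.le hw.deriv hw.deriv2
    (Filter.Eventually.of_forall fun x hx => ?_) ht h0 h1 s hs).1
  rw [abs_neg, abs_mul, abs_mul, abs_of_nonneg (hP.nonneg x)]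
  exact mul_le_mul_of_nonneg_right
    (mul_le_mul (hP.le_mid hab hx) (hC x hx) (abs_nonneg _) (hP.nonneg _)) (abs_nonneg _)

theorem exists_pos_right (hab : a < b) (hP : IsSymmUnimodal P a b)
    (hw : IsNontrivialLinearSol P γ w w' a b) (hγ : ContinuousOn γ (Icc a b))
    (hwa : 0 ≤ w a) (hwa' : 0 ≤ w' a) : ∃ y, a < y ∧ y ≤ b ∧ ∀ t ∈ Ioo a y, 0 < w t := by
  have haI : a ∈ Icc a b := ⟨le_rfl, hab.le⟩
  rcases eq_or_lt_of_le hwa with h | h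
  · have hpos : 0 < w' a := lt_of_le_of_ne hwa' (hw.deriv_ne_zero hab hP hγ haI h.symm).symm
    obtain ⟨y, h1, h2, h3⟩ := exists_forall_Ioo_lt_of_deriv_pos (hw.deriv a haI) le_rfl hab hpos
    exact ⟨y, h1, h2, fun t ht => h ▸ h3 t ht⟩
  · have h1 := ((hw.continuousOn a haI).mono_of_mem_nhdsWithin
      (Icc_mem_nhdsGT_of_mem ⟨le_rfl, hab⟩)).eventually (lt_mem_nhds h)
    obtain ⟨y, hy, hsub⟩ := mem_nhdsGT_iff_exists_Ioo_subset.1 h1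
    exact ⟨min y b, lt_min hy hab, min_le_right _ _, fun t ht =>
      hsub ⟨ht.1, ht.2.trans_le (min_le_left _ _)⟩⟩

/-- By comparison with the positive solution of the nonlinear problem, `w` has a first zero. -/
theorem exists_first_zero_of_wronskian {g u u' : ℝ → ℝ} (hab : a < b) (hP : IsSymmUnimodal P a b)
    (hu : IsPosDirichletSol P g u u' a b) (hw : IsNontrivialLinearSol P γ w w' a b)
    (hγ : ContinuousOn γ (Icc a b))
    (hgγ : ∀ t ∈ Icc a b, g (u t) ≤ γ t * u t) (hgγ' : ∀ t ∈ Ioo a b, g (u t) < γ t * u t)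
    (hua : 0 < u' a) (hub : u' b < 0) (hwa : 0 ≤ w a) (hwa' : 0 ≤ w' a) :
    ∃ ξ ∈ Ioo a b, w ξ = 0 ∧ (∀ t ∈ Ioo a ξ, 0 < w t) ∧ w' ξ < 0 := by
  have hnot : ¬ ∀ t ∈ Ioo a b, 0 < w t := by
    intro hpos
    have hpos' := nonneg_on_Icc_of_nonneg_on_Ioo hab hw.continuousOn fun t ht => (hpos t ht).le
    have huac : HasACDeriv u u' a b :=
      HasACDeriv.of_continuousOn hab.le hu.deriv (hu.continuousOn_deriv hab)
    have hwac : HasACDeriv w w' a b :=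
      HasACDeriv.of_continuousOn hab.le hw.deriv (hw.deriv2.continuousOn hab.le)
    have hW := ((hu.deriv2.mul hwac).sub (huac.mul hw.deriv2)).congr_deriv
      (k' := fun t => P t * (γ t * u t - g (u t)) * w t)
      (Filter.Eventually.of_forall fun t _ => by ring)
    obtain ⟨x, hax, hxc, hx⟩ := hP.pos
    have := hW.lt_of_nonneg_of_pos
      (Filter.Eventually.of_forall fun t ht =>
        mul_nonneg (mul_nonneg (hP.nonneg t) (sub_nonneg.2 (hgγ t ht))) (hpos' t ht))
      hax hxc (by linarith)
      (Filter.Eventually.of_forall fun t ht => by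
        have htI : t ∈ Ioo a b := ⟨hax.trans_lt ht.1, by linarith [ht.2]⟩
        exact mul_pos (mul_pos (hx t ⟨ht.1, ht.2.le⟩) (sub_pos.2 (hgγ' t htI))) (hpos t htI))
    simp only [hu.left, hu.right, zero_mul, sub_zero] at this
    nlinarith [mul_nonneg hua.le hwa, mul_nonneg (neg_nonneg.2 hub.le) (hpos' b ⟨hab.le, le_rfl⟩)]
  obtain ⟨y, hay, hyb, hy⟩ := hw.exists_pos_right hab hP hγ hwa hwa'
  obtain ⟨y₁, hay₁, hy₁y⟩ := exists_between hay
  push Not at hnot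
  obtain ⟨s, hs, hs0⟩ := hnot
  have hy₁s : y₁ ≤ s := by
    by_contra h
    exact absurd (hy s ⟨hs.1, (not_le.1 h).trans hy₁y⟩) (not_lt.2 hs0)
  obtain ⟨ξ, hξ, hξ0, hlt⟩ := exists_first_zero (f := fun t => -w t) (x := y₁) (b := s)
    (hw.continuousOn.mono (Icc_subset_Icc hay₁.le hs.2.le)).fun_neg
    (neg_neg_of_pos (hy y₁ ⟨hay₁, hy₁y⟩)) ⟨s, ⟨hy₁s, le_rfl⟩, by linarith⟩
  have hξI : ξ ∈ Ioo a b := ⟨hay₁.trans hξ.1, hξ.2.trans_lt hs.2⟩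
  have hw0 : w ξ = 0 := neg_eq_zero.1 hξ0
  have hpos : ∀ t ∈ Ioo a ξ, 0 < w t := by
    intro t ht
    rcases lt_or_ge t y₁ with h | h
    · exact hy t ⟨ht.1, h.trans hy₁y⟩
    · exact neg_neg_iff_pos.1 (hlt t ⟨h, ht.2⟩)
  have hξI' := Ioo_subset_Icc_self hξI
  exact ⟨ξ, hξI, hw0, hpos, lt_of_le_of_ne
    (deriv_nonpos_of_nonneg_left (hw.deriv ξ hξI') le_rfl hξI.1 hξI.2.le hw0
      fun t ht => (hpos t ht).le) (hw.deriv_ne_zero hab hP hγ hξI' hw0)⟩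

end IsNontrivialLinearSol

/-- A symmetric unimodal weight that is constant on `(a,c)` is almost everywhere constant. -/
theorem IsSymmUnimodal.exists_ae_eq_const {P : ℝ → ℝ} {a b : ℝ} (hP : IsSymmUnimodal P a b)
    (hab : a < b)
    (h : ∀ s t, a < s → s ≤ t → t < (a + b) / 2 → P t ≤ P s) :
    ∃ k, ∀ᵐ t, t ∈ Icc a b → P t = k := by
  obtain ⟨m, ham, hmc⟩ := exists_between (show a < (a + b) / 2 by linarith)
  have hleft : ∀ t ∈ Ioo a ((a + b) / 2), P t = P m := by
    intro t ht
    rcases le_total t m with hle | hle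
    · exact le_antisymm (hP.mono ⟨ht.1.le, ht.2.le⟩ ⟨ham.le, hmc.le⟩ hle) (h t m ht.1 hle hmc)
    · exact le_antisymm (h m t ham hle ht.2) (hP.mono ⟨ham.le, hmc.le⟩ ⟨ht.1.le, ht.2.le⟩ hle)
  refine ⟨P m, ?_⟩
  filter_upwards [(countable_singleton a).ae_notMem volume,
    (countable_singleton b).ae_notMem volume,
    (countable_singleton ((a + b) / 2)).ae_notMem volume] with t h1 h2 h3 ht
  have h1' := lt_of_le_of_ne ht.1 (Ne.symm h1)
  have h2' := lt_of_le_of_ne ht.2 h2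
  rcases lt_or_gt_of_ne (show t ≠ (a + b) / 2 from h3) with h4 | h4
  · exact hleft t ⟨h1', h4⟩
  · rw [← hP.symm t]
    exact hleft _ ⟨by linarith, by linarith⟩

theorem linearized_unique_zero
    (a b : ℝ) (hab : a < b)
    (g : ℝ → ℝ)
    (hg_C1 : ContDiffOn ℝ 1 g (Set.Ici 0))
    (hg_pos : ∀ s > 0, 0 < g s)
    (hg_ext : ∀ s ≤ (0 : ℝ), g s = 0)
    (hg_s : ∀ s > (0 : ℝ), g s / s < derivWithin g (Set.Ici 0) s)
    (q : ℝ → ℝ)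
    (hq_bv : IsBV a b q)
    (hq_nonneg : ∀ᵐ t ∂(volume.restrict (Set.Icc a b)), 0 ≤ q t)
    (hq_ne : ¬ ∀ᵐ t ∂(volume.restrict (Set.Icc a b)), q t = 0)
    (hq_symm : ∀ᵐ t ∂(volume.restrict (Set.Icc a b)), q t = q (a + b - t))
    (hq_mono : AEMonotoneOn q a ((a + b) / 2))
    (u u' : ℝ → ℝ)
    (hu_sol : IsCaraSol a b (fun t x => q t * g x) u u')
    (hua : u a = 0) (hub : u b = 0)
    (hu_pos : ∀ t ∈ Set.Ioo a b, 0 < u t)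
    (w w' : ℝ → ℝ)
    (hw_sol : IsCaraSol a b (fun t x => q t * derivWithin g (Set.Ici 0) (u t) * x) w w')
    (hw_nt : ∃ t ∈ Set.Icc a b, w t ≠ 0)
    (hwa : 0 ≤ w a) (hwa' : 0 ≤ w' a) :
    ∃ ξ ∈ Set.Ioo a b,
      w ξ = 0 ∧
      (∀ t ∈ Set.Ioo a ξ, 0 < w t) ∧
      (∀ t ∈ Set.Ioc a b, w t = 0 → t = ξ) ∧
      w b < 0 ∧
      -- the general case
      (¬ (w' a = 0 ∧ ∃ k : ℝ, ∀ᵐ t ∂(volume.restrict (Set.Icc a b)), q t = k) →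
        ξ ∈ Set.Ioo ((a + b) / 2) b ∧ ∀ t ∈ Set.Icc ξ b, w' t < 0) ∧
      -- the single exceptional case: a constant weight together with `w'(a) = 0`
      ((w' a = 0 ∧ ∃ k : ℝ, ∀ᵐ t ∂(volume.restrict (Set.Icc a b)), q t = k) →
        ξ = (a + b) / 2 ∧ (∀ t ∈ Set.Ico ξ b, w' t < 0) ∧ w' b = 0) := by
  rw [ae_restrict_iff' measurableSet_Icc] at hq_nonneg hq_ne
  obtain ⟨P, hP, hqP⟩ := exists_isSymmUnimodal
    ((ae_restrict_iff' measurableSet_Icc).2 hq_nonneg)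
    (by rwa [ae_restrict_iff' measurableSet_Icc]) hq_symm hq_mono
  simp only [ae_restrict_iff' (measurableSet_Icc (a := a) (b := b))]
  set c := (a + b) / 2 with hc
  have hac : a < c := by linarith
  have hcb : c < b := by linarith
  have hcI : c ∈ Icc a b := ⟨hac.le, hcb.le⟩
  set gd := derivWithin g (Ici 0) with hgd
  have hg00 : g 0 = 0 := hg_ext 0 le_rfl
  have hgc : Continuous g := continuous_of_continuousOn_Ici hg_C1.continuousOn hg_ext
  have hg0 : ∀ s, 0 ≤ g s := fun s => (le_or_gt s 0).elim (fun h => (hg_ext s h).ge)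
    fun h => (hg_pos s h).le
  have hgder : ∀ s ∈ Ici (0 : ℝ), HasDerivWithinAt g (gd s) (Ici 0) s := fun s hs =>
    ((hg_C1.differentiableOn one_ne_zero) s hs).hasDerivWithinAt
  have hu : IsPosDirichletSol P g u u' a b := by
    refine ⟨hu_sol.1, HasACDeriv.congr_deriv ⟨hu_sol.2.1,
      (ae_restrict_iff' measurableSet_Icc).1 hu_sol.2.2⟩ ?_, hua, hub, hu_pos⟩
    filter_upwards [hqP] with t ht h
    rw [ht h]
  have hw : IsNontrivialLinearSol P (fun t => gd (u t)) w w' a b := by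
    refine ⟨hw_sol.1, HasACDeriv.congr_deriv ⟨hw_sol.2.1,
      (ae_restrict_iff' measurableSet_Icc).1 hw_sol.2.2⟩ ?_, hw_nt⟩
    filter_upwards [hqP] with t ht h
    rw [ht h]
  have humaps : MapsTo u (Icc a b) (Ici 0) := hu.nonneg
  have hγ : ContinuousOn (fun t => gd (u t)) (Icc a b) :=
    (hg_C1.continuousOn_derivWithin (uniqueDiffOn_Ici 0) le_rfl).comp hu.continuousOn humaps
  have hu'pos := hu.deriv_pos_of_lt_mid hab hP hgc hg0 hg_C1 hg_pos
  have hu'neg := hu.deriv_neg_of_mid_lt hab hP hgc hg0 hg_C1 hg_pos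
  have hu'c : u' c = 0 := hu.deriv_mid hab hP hgc hg0 hg_C1
  have hgγ' : ∀ t ∈ Ioo a b, g (u t) < gd (u t) * u t := fun t ht =>
    (div_lt_iff₀ (hu_pos t ht)).1 (hg_s _ (hu_pos t ht))
  have hgγ : ∀ t ∈ Icc a b, g (u t) ≤ gd (u t) * u t := fun t ht => by
    rcases eq_or_lt_of_le (hu.nonneg t ht) with h | h
    · rw [← h, hg00, mul_zero]
    · exact ((div_lt_iff₀ h).1 (hg_s _ h)).le
  obtain ⟨ξ, hξ, hξ0, hξpos, hξ'⟩ := hw.exists_first_zero_of_wronskian hab hP hu hγ hgγ hgγ'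
    (hu'pos a ⟨le_rfl, hac⟩) (hu'neg b ⟨hcb, le_rfl⟩) hwa hwa'
  have hξI := Ioo_subset_Icc_self hξ
  have hw'c : ContinuousOn w' (Icc a b) := hw.deriv2.continuousOn hab.le
  have hwnn := nonneg_on_Icc_of_nonneg_on_Ioo hξ.1
    (hw.continuousOn.mono (Icc_subset_Icc_right hξ.2.le)) fun t ht => (hξpos t ht).le
  -- the auxiliary functions `Φ = u' w'` and `h = g(u) w`, with `Φ' = -P h'`
  let h : ℝ → ℝ := fun t => g (u t) * w t
  let h' : ℝ → ℝ := fun t => gd (u t) * u' t * w t + g (u t) * w' t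
  have hh : ∀ t ∈ Icc a b, HasDerivWithinAt h (h' t) (Icc a b) t := fun t ht =>
    ((hgder _ (humaps ht)).comp t (hu.deriv t ht) humaps).mul (hw.deriv t ht)
  have hh'c : ContinuousOn h' (Icc a b) :=
    ((hγ.mul (hu.continuousOn_deriv hab)).mul hw.continuousOn).add
      ((hgc.comp_continuousOn hu.continuousOn).mul hw'c)
  have hΦ : HasACDeriv (fun t => u' t * w' t) (fun t => -(P t * h' t)) a b :=
    (hu.deriv2.mul hw.deriv2).congr_deriv
      (Filter.Eventually.of_forall fun t _ => by simp only [h']; ring)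
  have hha : h a = 0 := by simp only [h, hua, hg00, zero_mul]
  have hhξ : h ξ = 0 := by simp only [h, hξ0, mul_zero]
  have hinc : ∀ s t, a ≤ s → s ≤ t → t ≤ c → ∀ m, (∀ x ∈ Icc s t, m ≤ h x) →
      u' s * w' s + P s * (h s - m) ≤ u' t * w' t + P t * (h t - m) := by
    intro s t has hst htc m hm
    have hsub : Icc s t ⊆ Icc a b := Icc_subset_Icc has (htc.trans hcb.le)
    exact HasACDeriv.add_mul_le_of_monotoneOn hst (h := fun x => h x - m)
      (hP.mono.mono (Icc_subset_Icc has htc)) (hΦ.mono has hst (htc.trans hcb.le))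
      (fun x hx => ((hh x (hsub hx)).sub_const m).mono hsub) (hh'c.mono hsub)
      fun x hx => sub_nonneg.2 (hm x hx)
  have hdec : ∀ s t, c ≤ s → s ≤ t → t ≤ b → (∀ x ∈ Icc s t, h x ≤ 0) →
      u' s * w' s + P s * h s ≤ u' t * w' t + P t * h t := by
    intro s t hcs hst htb hm
    have hsub : Icc s t ⊆ Icc a b := Icc_subset_Icc (hac.le.trans hcs) htb
    have := HasACDeriv.add_mul_le_of_monotoneOn hst (P := fun x => -P x) (h := fun x => -h x)
      (h' := fun x => -h' x)
      (hP.anti.mono (Icc_subset_Icc hcs htb)).neg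
      ((hΦ.mono (hac.le.trans hcs) hst htb).congr_deriv
        (Filter.Eventually.of_forall fun x _ => by ring))
      (fun x hx => (hh x (hsub hx)).neg.mono hsub) (hh'c.mono hsub).neg
      fun x hx => neg_nonneg.2 (hm x hx)
    linarith
  have hhnn : ∀ x ∈ Icc a ξ, 0 ≤ h x := fun x hx => mul_nonneg (hg0 _) (hwnn x hx)
  have hΦa : 0 ≤ u' a * w' a := mul_nonneg (hu'pos a ⟨le_rfl, hac⟩).le hwa'
  have hcξ : c ≤ ξ := by
    by_contra hlt
    rw [not_le] at hlt
    have h1 := hinc a ξ le_rfl hξ.1.le hlt.le 0 hhnn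
    rw [hha, hhξ] at h1
    nlinarith [mul_pos (hu'pos ξ ⟨hξ.1.le, hlt⟩) (neg_pos.2 hξ')]
  have hfinish : (∀ t ∈ Ico ξ b, w' t < 0) → (∀ t ∈ Ioc ξ b, w t < 0) := fun hneg t ht => by
    have := lt_of_hasDerivWithinAt_neg hw.deriv hξ.1.le ht.1 ht.2
      fun s hs => hneg s ⟨hs.1, hs.2.trans_le ht.2⟩
    rwa [hξ0] at this
  have huniq : (∀ t ∈ Ioc ξ b, w t < 0) → ∀ t ∈ Ioc a b, w t = 0 → t = ξ := fun hneg t ht h0 => by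
    rcases lt_trichotomy t ξ with h1 | h1 | h1
    · exact absurd h0 (hξpos t ⟨ht.1, h1⟩).ne'
    · exact h1
    · exact absurd h0 (hneg t ⟨h1, ht.2⟩).ne
  by_cases hE : w' a = 0 ∧ ∃ k : ℝ, ∀ᵐ t, t ∈ Icc a b → q t = k
  · obtain ⟨hw'a, k, hk⟩ := hE
    have hk0 : 0 < k := by
      by_contra hle
      refine hq_ne ?_
      filter_upwards [hk, hq_nonneg] with t h1 h2 ht
      exact le_antisymm (by rw [h1 ht]; exact not_lt.1 hle) (h2 ht)
    have hF : ∀ t ∈ Icc a b, u' t * w' t + k * h t = 0 := by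
      have hFac := (hΦ.add ((HasACDeriv.of_continuousOn hab.le hh hh'c).const_mul k)).congr_deriv
        (k' := fun _ => 0) (by
          filter_upwards [hk, hqP] with t h1 h2 ht
          rw [← h2 ht, h1 ht]
          ring)
      intro t ht
      have haI : a ∈ Icc a b := ⟨le_rfl, hab.le⟩
      have h1 := hFac.monotoneOn (Filter.Eventually.of_forall fun _ _ => le_rfl) haI ht ht.1
      have h2 := hFac.antitoneOn (Filter.Eventually.of_forall fun _ _ => le_rfl) haI ht ht.1
      simp only [hw'a, hha, mul_zero, add_zero] at h1 h2
      exact le_antisymm h2 h1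
    have hkg : ∀ t ∈ Ioo a b, 0 < k * g (u t) := fun t ht => mul_pos hk0 (hg_pos _ (hu_pos t ht))
    have hwc : w c = 0 := by
      have h1 := hF c hcI
      rw [hu'c, zero_mul, zero_add] at h1
      rcases mul_eq_zero.1 ((mul_assoc k (g (u c)) (w c)).trans h1) with h2 | h2
      · exact absurd h2 (hkg c ⟨hac, hcb⟩).ne'
      · exact h2
    have hξc : ξ = c := le_antisymm
      (not_lt.1 fun hlt => absurd hwc (hξpos c ⟨hac, hlt⟩).ne') hcξ
    have hneg : ∀ t ∈ Ico ξ b, w' t < 0 := by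
      intro t ht
      by_contra h0
      obtain ⟨η, hη, hη0, hηlt⟩ := exists_first_zero (x := ξ) (b := t)
        (hw'c.mono (Icc_subset_Icc hξ.1.le ht.2.le)) hξ' ⟨t, ⟨ht.1, le_rfl⟩, not_lt.1 h0⟩
      have hηI : η ∈ Ioo a b := ⟨hξ.1.trans hη.1, hη.2.trans_lt ht.2⟩
      have h1 := lt_of_hasDerivWithinAt_neg hw.deriv hξ.1.le hη.1 hηI.2.le hηlt
      rw [hξ0] at h1
      have h2 := hF η (Ioo_subset_Icc_self hηI)
      rw [hη0, mul_zero, zero_add] at h2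
      exact absurd ((mul_assoc k (g (u η)) (w η)).trans h2)
        (mul_neg_of_pos_of_neg (hkg η hηI) h1).ne
    have hwneg := hfinish hneg
    refine ⟨ξ, hξ, hξ0, hξpos, huniq hwneg, hwneg b ⟨hξ.2, le_rfl⟩,
      fun hno => absurd ⟨hw'a, k, hk⟩ hno, fun _ => ⟨hξc, hneg, ?_⟩⟩
    have h1 := hF b ⟨hab.le, le_rfl⟩
    simp only [h, hub, hg00, zero_mul, mul_zero, add_zero] at h1
    exact (mul_eq_zero.1 h1).resolve_left (hu'neg b ⟨hcb, le_rfl⟩).ne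
  · have hξc : c < ξ := by
      refine lt_of_le_of_ne hcξ fun heq => hE ?_
      rw [← heq] at hhnn hhξ
      have hle : ∀ s t, a ≤ s → s ≤ t → t ≤ c →
          u' s * w' s + P s * h s ≤ u' t * w' t + P t * h t := fun s t h1 h2 h3 => by
        have := hinc s t h1 h2 h3 0 fun x hx => hhnn x ⟨h1.trans hx.1, hx.2.trans h3⟩
        simpa using this
      have hFa := hle a c le_rfl hac.le le_rfl
      simp only [hha, hhξ, hu'c, mul_zero, add_zero, zero_mul] at hFa
      have hΦa0 := le_antisymm hFa hΦa
      refine ⟨(mul_eq_zero.1 hΦa0).resolve_left (hu'pos a ⟨le_rfl, hac⟩).ne', ?_⟩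
      obtain ⟨k, hk⟩ := hP.exists_ae_eq_const hab fun s t has hst htc => by
        have hsub : Icc s t ⊆ Icc a b := Icc_subset_Icc has.le (htc.le.trans hcb.le)
        obtain ⟨x, hx, hmin⟩ := isCompact_Icc.exists_isMinOn ⟨s, le_rfl, hst⟩
          (f := h) fun y hy => (hh y (hsub hy)).continuousWithinAt.mono hsub
        have hhx : 0 < h x := mul_pos
          (hg_pos _ (hu_pos x ⟨has.trans_le hx.1, hx.2.trans_lt (htc.trans hcb)⟩))
          (hξpos x ⟨has.trans_le hx.1, hx.2.trans_lt (heq ▸ htc)⟩)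
        have h1 := hle a s le_rfl has.le (hst.trans htc.le)
        have h2 := hinc s t has.le hst htc.le (h x) fun y hy => hmin hy
        have h3 := hle t c (has.le.trans hst) htc.le le_rfl
        simp only [hha, hhξ, hu'c, hΦa0, mul_zero, add_zero, zero_mul] at h1 h3
        have h4 : 0 ≤ (P s - P t) * h x := by linarith
        linarith [nonneg_of_mul_nonneg_left h4 hhx]
      refine ⟨k, ?_⟩
      filter_upwards [hk, hqP] with t h1 h2 ht
      rw [h2 ht, h1 ht]
    have hneg : ∀ t ∈ Icc ξ b, w' t < 0 := by
      by_contra hno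
      push Not at hno
      obtain ⟨η, hη, hη0, hηlt⟩ := exists_first_zero (hw'c.mono (Icc_subset_Icc_left hξ.1.le)) hξ' hno
      have hwle : ∀ t ∈ Icc ξ η, w t ≤ 0 := by
        intro t ht
        rcases eq_or_lt_of_le ht.1 with rfl | hlt
        · exact hξ0.le
        · have := lt_of_hasDerivWithinAt_neg hw.deriv hξ.1.le hlt (ht.2.trans hη.2)
            fun s hs => hηlt s ⟨hs.1, hs.2.trans_le ht.2⟩
          rw [hξ0] at this
          exact this.le
      have hhle : ∀ t ∈ Icc ξ η, h t ≤ 0 := fun t ht =>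
        mul_nonpos_of_nonneg_of_nonpos (hg0 _) (hwle t ht)
      have h1 := hdec ξ η hcξ hη.1.le hη.2 hhle
      rw [hhξ, hη0] at h1
      have h2 := mul_nonpos_of_nonneg_of_nonpos (hP.nonneg η) (hhle η ⟨hη.1.le, le_rfl⟩)
      have h3 := mul_pos_of_neg_of_neg (hu'neg ξ ⟨hξc, hξ.2.le⟩) hξ'
      linarith
    have hwneg := hfinish fun t ht => hneg t ⟨ht.1, ht.2.le⟩
    exact ⟨ξ, hξ, hξ0, hξpos, huniq hwneg, hwneg b ⟨hξ.2, le_rfl⟩,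
      fun _ => ⟨⟨hξc, hξ.2⟩, hneg⟩, fun hyes => absurd hyes hE⟩
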